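/- There is a constant c > 0 such that for every integer d ≥ 1 the following holds. There exists a finite set S of polynomials of degree at most 2, of cardinality O(d), such that sup_{x∈[-1,1]} |f(x) − g(x)| ≤ 2σ_d for all f, g ∈ S, where σ_d = (1 − 1/(64d³))/2, and yet every polynomial q of degree at most d satisfies max_{f∈S} sup_{x∈[-1,1]} |q(x) − f(x)| ≥ σ_d + c/d³. Consequently, any proper degree-d ℓ∞ approximation from data consistent with noise level σ_d must incur approximation factor at least 1 + Ω(1/d³). -/

import Mathlib

open Polynomial

/-- The sup-norm of `f` over `[-1, 1]`. -/
noncomputable def supNorm (f : ℝ → ℝ) : ℝ := ⨆ x : Set.Icc (-1 : ℝ) 1, |f x|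

/-- The family: downward parabolas for even `k`, upward ones for odd `k`, vertex at `k e / 2`. -/
noncomputable def fam (e : ℝ) (k : ℕ) : Polynomial ℝ :=
  if Even k then 1 - C (e / 8) * (X - C (k * e / 2)) ^ 2
  else C (e / 8) * (X - C (k * e / 2)) ^ 2

lemma fam_even {e : ℝ} {k : ℕ} (h : Even k) (x : ℝ) :
    (fam e k).eval x = 1 - e / 8 * (x - k * e / 2) ^ 2 := by
  simp [fam, h]

lemma fam_odd {e : ℝ} {k : ℕ} (h : ¬ Even k) (x : ℝ) :
    (fam e k).eval x = e / 8 * (x - k * e / 2) ^ 2 := by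
  simp [fam, h]

lemma fam_deg (e : ℝ) (k : ℕ) : (fam e k).natDegree ≤ 2 := by
  unfold fam
  split_ifs <;> compute_degree

lemma abs_le_supNorm (p f : Polynomial ℝ) (x : ℝ) (hx : x ∈ Set.Icc (-1 : ℝ) 1) :
    |p.eval x - f.eval x| ≤ _root_.supNorm (fun x => p.eval x - f.eval x) := by
  unfold _root_.supNorm
  have hb : BddAbove (Set.range fun y : Set.Icc (-1 : ℝ) 1 => |p.eval (y : ℝ) - f.eval (y : ℝ)|) :=
    (isCompact_range (by fun_prop)).bddAbove
  exact le_ciSup hb ⟨x, hx⟩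

lemma even_odd_bound {e : ℝ} (he : 0 < e) (he1 : e ≤ 1) {j k : ℕ} (hj : Even j) (hk : ¬ Even k)
    {x : ℝ} (hu : (x - j * e / 2) ^ 2 ≤ 4) (hv : (x - k * e / 2) ^ 2 ≤ 4) :
    |(1 - e / 8 * (x - j * e / 2) ^ 2) - e / 8 * (x - k * e / 2) ^ 2| ≤ 1 - e ^ 3 / 64 := by
  have hne : (j : ℤ) - k ≠ 0 := by
    intro h
    have : j = k := by omega
    subst this
    exact hk hj
  have h1 : (1 : ℝ) ≤ ((j : ℝ) - k) ^ 2 := by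
    have h : (1 : ℤ) ≤ ((j : ℤ) - k) ^ 2 := by
      have := sq_pos_of_ne_zero hne
      omega
    exact_mod_cast h
  have h2 : e ^ 2 / 8 ≤ (x - j * e / 2) ^ 2 + (x - k * e / 2) ^ 2 := by
    have : e ^ 2 * 1 ≤ e ^ 2 * ((j : ℝ) - k) ^ 2 := by gcongr
    nlinarith [sq_nonneg ((x - j * e / 2) + (x - k * e / 2))]
  have h3 : e ^ 3 ≤ e := by nlinarith [mul_nonneg he.le he.le]
  generalize (x - j * e / 2) ^ 2 = u at *
  generalize (x - k * e / 2) ^ 2 = v at *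
  rw [abs_le]
  have h4 : e / 8 * (e ^ 2 / 8) ≤ e / 8 * (u + v) := by gcongr
  constructor
  · have : e / 8 * (u + v) ≤ e / 8 * 8 := by gcongr; linarith
    nlinarith
  · nlinarith

lemma same_bound {e u v : ℝ} (he : 0 < e) (he1 : e ≤ 1) (hu : u ≤ 4) (hv : v ≤ 4)
    (hu0 : 0 ≤ u) (hv0 : 0 ≤ v) :
    |e / 8 * u - e / 8 * v| ≤ 1 - e ^ 3 / 64 := by
  have h3 : e ^ 3 ≤ 1 := pow_le_one₀ he.le he1
  have a : e / 8 * u ≤ 1 / 8 * 4 := by gcongr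
  have b : e / 8 * v ≤ 1 / 8 * 4 := by gcongr
  have a0 : 0 ≤ e / 8 * u := by positivity
  have b0 : 0 ≤ e / 8 * v := by positivity
  rw [abs_le]
  constructor <;> linarith

lemma fam_bound {e : ℝ} (he : 0 < e) (he1 : e ≤ 1) {j k : ℕ} {x : ℝ}
    (hu : (x - j * e / 2) ^ 2 ≤ 4) (hv : (x - k * e / 2) ^ 2 ≤ 4) :
    |(fam e j).eval x - (fam e k).eval x| ≤ 1 - e ^ 3 / 64 := by
  by_cases hj : Even j <;> by_cases hk : Even k
  · rw [fam_even hj, fam_even hk]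
    have := same_bound he he1 hv hu (sq_nonneg _) (sq_nonneg _)
    convert this using 2
    ring
  · rw [fam_even hj, fam_odd hk]
    exact even_odd_bound he he1 hj hk hu hv
  · rw [fam_odd hj, fam_even hk, abs_sub_comm]
    exact even_odd_bound he he1 hk hj hv hu
  · rw [fam_odd hj, fam_odd hk]
    exact same_bound he he1 hu hv (sq_nonneg _) (sq_nonneg _)

/-- A polynomial of degree at most `d` cannot alternate around `1/2` at `d + 2` points. -/
lemma no_alternation {d : ℕ} (q : Polynomial ℝ) (hq : q.natDegree ≤ d) {s : ℝ} (hs : 0 < s)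
    (hE : ∀ k ≤ d + 1, Even k → 1 / 2 < q.eval (k * s))
    (hO : ∀ k ≤ d + 1, ¬ Even k → q.eval (k * s) < 1 / 2) : False := by
  have hroot : ∀ k : ℕ, ∃ y : ℝ, k ≤ d → (k * s < y ∧ y < (k + 1) * s ∧ q.eval y = 1 / 2) := by
    intro k
    by_cases hk : k ≤ d
    swap
    · exact ⟨0, fun h => absurd h hk⟩
    have hle : (k : ℝ) * s ≤ (k + 1) * s := by nlinarith
    have hc : ContinuousOn (fun y => q.eval y) (Set.Icc ((k : ℝ) * s) ((k + 1) * s)) := by fun_prop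
    by_cases he : Even k
    · have h1 := hE k (by omega) he
      have h2 := hO (k + 1) (by omega) (by simpa [Nat.even_add_one] using he)
      push_cast at h2
      obtain ⟨y, hy, hy2⟩ := intermediate_value_Ioo' hle hc ⟨h2, h1⟩
      exact ⟨y, fun _ => ⟨hy.1, hy.2, hy2⟩⟩
    · have h1 := hO k (by omega) he
      have h2 := hE (k + 1) (by omega) (by simpa [Nat.even_add_one] using he)
      push_cast at h2
      obtain ⟨y, hy, hy2⟩ := intermediate_value_Ioo hle hc ⟨h1, h2⟩
      exact ⟨y, fun _ => ⟨hy.1, hy.2, hy2⟩⟩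
  choose y hy using hroot
  have hlt : ∀ i j : ℕ, i ≤ d → j ≤ d → i < j → y i < y j := by
    intro i j hi hj hij
    have h : ((i : ℝ) + 1) ≤ j := by exact_mod_cast hij
    have := mul_le_mul_of_nonneg_right h hs.le
    linarith [(hy i hi).2.1, (hy j hj).1]
  have hinj : Set.InjOn y (Finset.range (d + 1)) := by
    intro i hi j hj hij
    simp only [Finset.coe_range, Set.mem_Iio] at hi hj
    rcases lt_trichotomy i j with h | h | h
    · have := hlt i j (by omega) (by omega) h
      linarith
    · exact h
    · have := hlt j i (by omega) (by omega) h
      linarith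
  have hp0 : q - C (1 / 2) = 0 := by
    apply Polynomial.eq_zero_of_natDegree_lt_card_of_eval_eq_zero' _ ((Finset.range (d + 1)).image y)
    · intro z hz
      obtain ⟨k, hk, rfl⟩ := Finset.mem_image.1 hz
      have := (hy k (by simpa [Nat.lt_succ_iff] using hk)).2.2
      simp [this]
    · rw [Finset.card_image_of_injOn hinj, Finset.card_range, natDegree_sub_C]
      omega
  have h0 := hE 0 (by omega) (by simp)
  rw [sub_eq_zero.1 hp0] at h0
  simp at h0

/-- There are `O(d)` quadratics, pairwise within `ℓ∞` distance `2σ_d` of each other on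
`[-1,1]` for `σ_d = (1 − 1/(64d³))/2`, such that every degree-`d` polynomial is at
`ℓ∞` distance at least `σ_d + Ω(1/d³)` from one of them. -/
theorem degree_d_approx_lower_bound :
    ∃ c C : ℝ, 0 < c ∧ 0 < C ∧
      ∀ d : ℕ, 1 ≤ d →
        ∃ S : Finset (Polynomial ℝ),
          (S.card : ℝ) ≤ C * d ∧
          (∀ f ∈ S, f.natDegree ≤ 2) ∧
          (∀ f ∈ S, ∀ g ∈ S,
            supNorm (fun x => f.eval x - g.eval x) ≤
              2 * ((1 - 1 / (64 * (d : ℝ) ^ 3)) / 2)) ∧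
          ∀ q : Polynomial ℝ, q.natDegree ≤ d →
            ∃ f ∈ S,
              (1 - 1 / (64 * (d : ℝ) ^ 3)) / 2 + c / (d : ℝ) ^ 3 ≤
                supNorm (fun x => q.eval x - f.eval x) := by
  classical
  refine ⟨1 / 128, 3, by norm_num, by norm_num, fun d hd => ?_⟩
  have hd1 : (1 : ℝ) ≤ d := by exact_mod_cast hd
  have hd0 : (0 : ℝ) < d := by linarith
  set e : ℝ := 1 / d with he_def
  have he : 0 < e := by positivity
  have he1 : e ≤ 1 := by rw [he_def, div_le_one hd0]; exact hd1
  have hde : (d : ℝ) * e = 1 := by rw [he_def]; field_simp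
  have hmem : ∀ k : ℕ, k < d + 2 → 0 ≤ (k : ℝ) * e / 2 ∧ (k : ℝ) * e / 2 ≤ 1 := by
    intro k hk
    have h : (k : ℝ) ≤ d + 1 := by exact_mod_cast (by omega : k ≤ d + 1)
    have := mul_le_mul_of_nonneg_right h he.le
    exact ⟨by positivity, by linarith⟩
  have hsq : ∀ k : ℕ, k < d + 2 → ∀ x ∈ Set.Icc (-1 : ℝ) 1, (x - k * e / 2) ^ 2 ≤ 4 := by
    intro k hk x hx
    obtain ⟨h1, h2⟩ := hmem k hk
    nlinarith [hx.1, hx.2]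
  refine ⟨(Finset.range (d + 2)).image (fam e), ?_, ?_, ?_, ?_⟩
  · have h : ((Finset.range (d + 2)).image (fam e)).card ≤ 3 * d :=
      Finset.card_image_le.trans (by rw [Finset.card_range]; omega)
    exact_mod_cast h
  · intro f hf
    obtain ⟨k, -, rfl⟩ := Finset.mem_image.1 hf
    exact fam_deg e k
  · intro f hf g hg
    obtain ⟨j, hj, rfl⟩ := Finset.mem_image.1 hf
    obtain ⟨k, hk, rfl⟩ := Finset.mem_image.1 hg
    have hval : 2 * ((1 - 1 / (64 * (d : ℝ) ^ 3)) / 2) = 1 - e ^ 3 / 64 := by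
      rw [he_def]; field_simp
    rw [hval]
    haveI : Nonempty (Set.Icc (-1 : ℝ) 1) := ⟨⟨0, by norm_num, by norm_num⟩⟩
    exact ciSup_le fun x => fam_bound he he1 (hsq j (Finset.mem_range.1 hj) x x.2)
      (hsq k (Finset.mem_range.1 hk) x x.2)
  · intro q hq
    by_contra hcon
    push Not at hcon
    have hval : (1 - 1 / (64 * (d : ℝ) ^ 3)) / 2 + 1 / 128 / (d : ℝ) ^ 3 = 1 / 2 := by
      field_simp
      ring
    have key : ∀ k ≤ d + 1, |q.eval ((k : ℝ) * e / 2) - (fam e k).eval ((k : ℝ) * e / 2)| < 1 / 2 := by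
      intro k hk
      have hm := hmem k (by omega)
      have := hcon (fam e k) (Finset.mem_image_of_mem _ (Finset.mem_range.2 (by omega)))
      rw [hval] at this
      exact (abs_le_supNorm q _ _ ⟨by linarith [hm.1], hm.2⟩).trans_lt this
    refine no_alternation q hq (s := e / 2) (by positivity) ?_ ?_
    · intro k hk hev
      have := key k hk
      rw [fam_even hev, abs_lt] at this
      rw [← mul_div_assoc]
      simp only [sub_self] at this
      linarith [this.1]
    · intro k hk hev
      have := key k hk
      rw [fam_odd hev, abs_lt] at this
      rw [← mul_div_assoc]
      simp only [sub_self] at this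
      linarith [this.2]
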